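/- arXiv:1601.01324 — 2 statements merged into one kernel-verified Lean document; each statement's English description precedes it below -/
import Mathlib

section
/- Let d be a positive integer and let f be a zero-sum free multiset over ℤ_d. Then for every x ∈ ℤ_d, the spectrum strictly increases when the singleton x is adjoined: sp(f) is a strict subset of sp(f + {x}). -/
/-- The spectrum of a multiset over `ZMod d`: the set of all sums of nonempty submultisets. -/
def mspec {d : ℕ} (f : Multiset (ZMod d)) : Set (ZMod d) :=
  {s | ∃ g : Multiset (ZMod d), g ≤ f ∧ g ≠ 0 ∧ g.sum = s}

/-- A multiset over `ZMod d` is zero-sum free if no nonempty submultiset sums to `0`. -/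
def ZeroSumFree {d : ℕ} (f : Multiset (ZMod d)) : Prop :=
  (0 : ZMod d) ∉ mspec f

/-!
If adjoining `x` to `f` produces no new sum, then the spectrum `S` of `f` contains `x` and is
mapped into itself by the translation `s ↦ x + s`. This translation is injective and `S` is finite,
so it is onto `S`; hence `x = x + s` for some `s ∈ S`, and `s = 0`.
-/

section Spectrum

open Set

variable {M : Type*}

theorem zero_mem_of_mapsTo_add_left [AddZeroClass M] [IsLeftCancelAdd M] {S : Set M} {x : M}
    (hS : S.Finite) (hx : x ∈ S) (hmaps : MapsTo (x + ·) S S) : 0 ∈ S := by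
  have hbij : BijOn (x + ·) S S :=
    (hS.injOn_iff_bijOn_of_mapsTo hmaps).mp (add_right_injective x).injOn
  obtain ⟨s, hs, hxs : x + s = x⟩ := hbij.surjOn hx
  obtain rfl : s = 0 := add_left_cancel (hxs.trans (add_zero x).symm)
  exact hs

variable [AddCommMonoid M] {f f' : Multiset M}

/-- The spectrum of a multiset over a commutative additive monoid: the set of all sums of its
nonempty submultisets. Over `ZMod d` it is `mspec` by definition. -/
def subsumSpectrum (f : Multiset M) : Set M :=
  {s | ∃ g ≤ f, g ≠ 0 ∧ g.sum = s}

theorem finite_subsumSpectrum (f : Multiset M) : (subsumSpectrum f).Finite := by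
  classical
  refine ((finite_Iic f).image Multiset.sum).subset ?_
  rintro s ⟨g, hg, -, hs⟩
  exact ⟨g, hg, hs⟩

theorem subsumSpectrum_mono (h : f ≤ f') : subsumSpectrum f ⊆ subsumSpectrum f' := by
  rintro s ⟨g, hg, hg_ne, hs⟩
  exact ⟨g, hg.trans h, hg_ne, hs⟩

theorem mem_subsumSpectrum_cons_self (x : M) (f : Multiset M) : x ∈ subsumSpectrum (x ::ₘ f) :=
  ⟨{x}, by simp, by simp, by simp⟩

theorem mapsTo_add_left_subsumSpectrum_cons (x : M) (f : Multiset M) :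
    MapsTo (x + ·) (subsumSpectrum f) (subsumSpectrum (x ::ₘ f)) := by
  rintro _ ⟨g, hg, -, rfl⟩
  exact ⟨x ::ₘ g, Multiset.cons_le_cons x hg, Multiset.cons_ne_zero, Multiset.sum_cons x g⟩

theorem spectrum_strict_increase_general [IsCancelAdd M] (hf : 0 ∉ subsumSpectrum f) (x : M) :
    subsumSpectrum f ⊂ subsumSpectrum (x ::ₘ f) := by
  refine ⟨subsumSpectrum_mono (Multiset.le_cons_self f x), fun hsub => hf ?_⟩
  exact zero_mem_of_mapsTo_add_left (finite_subsumSpectrum f)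
    (hsub (mem_subsumSpectrum_cons_self x f))
    ((mapsTo_add_left_subsumSpectrum_cons x f).mono_right hsub)

end Spectrum

/-- The spectrum of a zero-sum free multiset over `ℤ_d` strictly increases when
adjoining any singleton. -/
theorem spectrum_strict_increase (d : ℕ) (hd : 0 < d) (f : Multiset (ZMod d))
    (hf : ZeroSumFree f) (x : ZMod d) :
    mspec f ⊂ mspec (x ::ₘ f) :=
  spectrum_strict_increase_general hf x
end

section
/- Let d be a positive integer and let f be a multiset of natural numbers all of whose elements are strictly less than d, such that no nonempty submultiset of f has sum divisible by d. Then the (integer) sum of all elements of f is at most (d − 1)². -/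
/-!
A list of length at least `d` has more than `d` prefixes, counting the empty one, so two of them
have the same sum modulo `d`, and the segment between these two has sum zero. Hence a zero-sum
free multiset has at most `d - 1` elements, each at most `d - 1`.
-/

/-- A multiset of natural numbers is zero-sum free modulo `d` if no nonempty submultiset
has sum divisible by `d`. -/
def ZeroSumFreeMod (d : ℕ) (f : Multiset ℕ) : Prop :=
  ∀ g : Multiset ℕ, g ≤ f → g ≠ 0 → ¬ (d ∣ g.sum)

@[to_additive]
theorem prod_drop_take_eq_one_of_prod_take_eq {M : Type*} [LeftCancelMonoid M] {l : List M}
    {i j : ℕ} (hij : i ≤ j) (h : (l.take i).prod = (l.take j).prod) :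
    ((l.take j).drop i).prod = 1 := by
  have hsplit : (l.take i).prod * ((l.take j).drop i).prod = (l.take j).prod := by
    simpa only [List.take_take, min_eq_left hij] using List.prod_take_mul_prod_drop (l.take j) i
  exact mul_eq_left.mp (hsplit.trans h.symm)

theorem exists_lt_map_eq_of_natCard_lt {α β : Type*} [LinearOrder α] [Finite β]
    (hcard : Nat.card β < Nat.card α) (f : α → β) : ∃ a b, a < b ∧ f a = f b := by
  by_contra! hne
  exact hcard.not_ge (Nat.card_le_card_of_injective f (.of_lt_imp_ne hne))

@[to_additive]
theorem exists_infix_prod_eq_one {M : Type*} [LeftCancelMonoid M] [Finite M] (l : List M)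
    (hl : Nat.card M ≤ l.length) : ∃ t, t <:+: l ∧ t ≠ [] ∧ t.prod = 1 := by
  have hcard : Nat.card M < Nat.card (Fin (l.length + 1)) := by
    rw [Nat.card_fin]
    exact Nat.lt_succ_of_le hl
  obtain ⟨i, j, hij, h⟩ := exists_lt_map_eq_of_natCard_lt hcard fun i ↦ (l.take i).prod
  refine ⟨(l.take j).drop i, ?_, ?_, prod_drop_take_eq_one_of_prod_take_eq hij.le h⟩
  · exact (List.drop_suffix i _).isInfix.trans (List.take_prefix j l).isInfix
  · rw [Ne, List.drop_eq_nil_iff, List.length_take]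
    omega

@[to_additive]
theorem exists_le_prod_map_eq_one {ι M : Type*} [CancelCommMonoid M] [Finite M]
    (s : Multiset ι) (f : ι → M) (hs : Nat.card M ≤ s.card) :
    ∃ t ≤ s, t ≠ 0 ∧ (t.map f).prod = 1 := by
  obtain ⟨l, rfl⟩ : ∃ l : List ι, (l : Multiset ι) = s := Quot.exists_rep s
  obtain ⟨t, ht, hne, hprod⟩ := exists_infix_prod_eq_one (l.map f) (by simpa using hs)
  obtain ⟨u, hu, rfl⟩ := List.sublist_map_iff.mp ht.sublist
  exact ⟨u, hu.subperm, by simpa using hne, by simpa using hprod⟩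

theorem ZeroSumFreeMod.card_lt {d : ℕ} (hd : 0 < d) {f : Multiset ℕ} (hf : ZeroSumFreeMod d f) :
    f.card < d := by
  by_contra! hcard
  have : NeZero d := ⟨hd.ne'⟩
  obtain ⟨g, hg, hne, hsum⟩ :=
    exists_le_sum_map_eq_zero f (Nat.cast : ℕ → ZMod d) (by simpa using hcard)
  refine hf g hg hne ((ZMod.natCast_eq_zero_iff _ d).mp ?_)
  rwa [Nat.cast_multiset_sum]

/-- A multiset of naturals, all `< d`, with no nonempty submultiset summing to `0` mod `d`,
has total (integer) sum at most `(d - 1)²`. -/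
theorem sum_le_of_zeroSumFreeMod (d : ℕ) (hd : 0 < d) (f : Multiset ℕ)
    (hlt : ∀ a ∈ f, a < d) (hf : ZeroSumFreeMod d f) :
    f.sum ≤ (d - 1) ^ 2 := by
  calc
    f.sum ≤ f.card • (d - 1) :=
      f.sum_le_card_nsmul _ fun a ha ↦ Nat.le_sub_one_of_lt (hlt a ha)
    _ = f.card * (d - 1) := smul_eq_mul ..
    _ ≤ (d - 1) * (d - 1) := by gcongr; exact Nat.le_sub_one_of_lt (hf.card_lt hd)
    _ = (d - 1) ^ 2 := (sq _).symm
end
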